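/- Let B ⊆ A be an inclusion of simple unital C*-algebras with common unit admitting a finite-index conditional expectation E : A → B, and let C := C*(B ∪ C_A(B)). Then every u ∈ N_A(B) satisfies u C_A(B) u* = C_A(B) and u C u* = C (so N_A(B) ⊆ N_A(C_A(B)) ∩ N_A(C)); moreover, for every w ∈ N_A(B) with w ∉ U(B)·U(C_A(B)), the automorphism Ad(w)|_C of C is free and E(w) = 0. In particular, for u, v ∈ N_A(B) with v u* ∉ U(B)·U(C_A(B)), one has E(v u*) = 0 = E(v* u). -/

import Mathlib

/-!
For `w` in the normalizer put `θ(x) = w x w*` on `B`. If `c` centralizes `B`, the element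
`b = E (w c)` intertwines: `b x = θ(x) b` for `x ∈ B`. Hence `b* b` and `b b*` are central in `B`,
so they are scalars because `B` is simple; if `b ≠ 0`, a multiple of `b` is a unitary `v ∈ B`
with `v* w` in the centralizer, i.e. `w ∈ U(B) U(C_A(B))`
(`condExp_normalizer_mul_cent_eq_zero`). Outside that set, therefore, `E (w c) = 0` for every
`c ∈ C_A(B)`; `c = 1` gives `E w = 0`.

For freeness, `a x = w x w* a` on `C` makes `c = w* a` commute with `C ⊇ B`, so `a = w c` with
`c ∈ C_A(B)`. The vanishing of `E (w c)` extends to `E (w c z) = 0` for every `z ∈ C`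
(`condExp_mul_genC_eq_zero`), using `w b = θ(b) w` and continuity of `E`. Taking `z = a*` gives
`E (a a*) = 0`, and then `a = 0` because a conditional expectation with a quasi-basis is faithful:
by a Cauchy–Schwarz argument all the coefficients `E (a λ_i)` vanish.
-/

namespace RegularInclusion

variable {A : Type*} [NormedRing A] [StarRing A] [CStarRing A] [CompleteSpace A]
  [NormedAlgebra ℂ A] [StarModule ℂ A]

/-- A conditional expectation of `A` onto the subset `B`: a `ℂ`-linear positive
`B`-bimodular projection of `A` onto `B`. -/
def IsCondExp (B : Set A) (E : A →ₗ[ℂ] A) : Prop :=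
  (∀ x, E x ∈ B) ∧ (∀ b ∈ B, E b = b) ∧
  (∀ x, ∃ y, E (star x * x) = star y * y) ∧
  (∀ b₁ ∈ B, ∀ b₂ ∈ B, ∀ x, E (b₁ * x * b₂) = b₁ * E x * b₂)

/-- `l` is a right quasi-basis for `E`, witnessing finite index. -/
def IsRightQB (E : A →ₗ[ℂ] A) {n : ℕ} (l : Fin n → A) : Prop :=
  ∀ x, x = ∑ i, E (x * l i) * star (l i)

/-- The centralizer (relative commutant) `C_A(B)` of `B` in `A`. -/
def cent (B : Set A) : Set A := {x | ∀ b ∈ B, x * b = b * x}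

/-- The normalizer `N_A(B) = {u ∈ U(A) : uBu* = B}` of `B` in `A`. -/
def normalizer (B : Set A) : Set A :=
  {u | u ∈ unitary A ∧ (fun x => u * x * star u) '' B = B}

/-- The set `U(B)` of unitaries of `B`. -/
def UB (B : Set A) : Set A := {b | b ∈ B ∧ b ∈ unitary A}

/-- The set `U(B)·U(C_A(B))` of products of a unitary of `B` and a unitary of
the centralizer of `B`. -/
def UBC (B : Set A) : Set A :=
  {x | ∃ b c, b ∈ B ∧ b ∈ unitary A ∧ c ∈ cent B ∧ c ∈ unitary A ∧ x = b * c}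

/-- Simplicity of the C*-algebra (given as the subset `S` of `A`): the only closed
two-sided ideals of `S` are `{0}` and `S`. -/
def IsSimpleCStar (S : Set A) : Prop :=
  ∀ I : Set A, I ⊆ S → IsClosed I → (0 : A) ∈ I →
    (∀ x ∈ I, ∀ y ∈ I, x + y ∈ I) →
    (∀ x ∈ I, ∀ b ∈ S, x * b ∈ I ∧ b * x ∈ I) →
    I = {0} ∨ I = S

/-- The intermediate C*-subalgebra `C := C*(B ∪ C_A(B))` generated by `B` and the
centralizer of `B`. -/
def genC (B : Set A) : StarSubalgebra ℂ A :=
  (StarAlgebra.adjoin ℂ (B ∪ cent B)).topologicalClosure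

/-- Regularity of the inclusion `B ⊆ A`: the normalizer of `B` generates `A` as a
C*-algebra. -/
def IsRegular (B : Set A) : Prop :=
  (StarAlgebra.adjoin ℂ (normalizer B)).topologicalClosure = ⊤

/-- `E₀` is the minimal conditional expectation of `A` onto `B`: the finite-index
conditional expectation whose (scalar) Watatani index is least among all finite-index
conditional expectations onto `B`. -/
def IsMinimalCondExp (B : Set A) (E₀ : A →ₗ[ℂ] A) : Prop :=
  IsCondExp B E₀ ∧
  ∃ (r₀ : ℝ) (n : ℕ) (l : Fin n → A), IsRightQB E₀ l ∧
    (∑ i, l i * star (l i)) = (r₀ : ℂ) • 1 ∧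
    ∀ E : A →ₗ[ℂ] A, IsCondExp B E → ∀ (m : ℕ) (μ : Fin m → A), IsRightQB E μ →
      ∀ r : ℝ, (∑ i, μ i * star (μ i)) = (r : ℂ) • 1 → r₀ ≤ r

/-! ### Analytic properties of conditional expectations -/

/-- Positivity makes a conditional expectation continuous and `*`-preserving. -/
lemma condExp_continuous_and_star {B : Set A} {E : A →ₗ[ℂ] A} (hE : IsCondExp B E) :
    Continuous E ∧ ∀ x, E (star x) = star (E x) := by
  let : CStarAlgebra A := {}
  let := CStarAlgebra.spectralOrder A
  have := CStarAlgebra.spectralOrderedRing A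
  let F : A →ₚ[ℂ] A := PositiveLinearMap.mk₀ E (fun x hx => by
    obtain ⟨y, rfl⟩ := CStarAlgebra.nonneg_iff_eq_star_mul_self.mp hx
    obtain ⟨z, hz⟩ := hE.2.2.1 y
    rw [hz]
    exact star_mul_self_nonneg z)
  exact ⟨map_continuous F, fun x => map_star F x⟩

/-- Cauchy–Schwarz: if `E (x x*) = 0` then `E (x l) = 0` for every `l`. -/
lemma condExp_mul_eq_zero {B : StarSubalgebra ℂ A} {E : A →ₗ[ℂ] A}
    (hE : IsCondExp (B : Set A) E) {x : A} (hx : E (x * star x) = 0) (l : A) :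
    E (x * l) = 0 := by
  let : CStarAlgebra A := {}
  let := CStarAlgebra.spectralOrder A
  have := CStarAlgebra.spectralOrderedRing A
  obtain ⟨-, hstar⟩ := condExp_continuous_and_star hE
  obtain ⟨hB, -, hpos, hbi⟩ := hE
  set b := E (x * l) with hb
  have hbB : b ∈ B := hB _
  have hbB' : star b ∈ B := star_mem hbB
  set K := b * E (star l * l) * star b with hK
  -- positivity of `E` at `z z*` for `z = t x - b l*`
  have key : ∀ t : ℝ, 0 ≤ t → ‖(2 * t : ℝ) • (b * star b)‖ ≤ ‖K‖ := by
    intro t ht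
    obtain ⟨y, hy⟩ := hpos (star ((t : ℂ) • x - b * star l))
    have e1 : E (x * l * star b) = b * star b := by
      simpa using hbi 1 B.one_mem _ hbB' (x * l)
    have e2 : E (b * (star l * star x)) = b * star b := by
      have h := hbi b hbB 1 B.one_mem (star l * star x)
      rw [mul_one, mul_one, ← star_mul, hstar, ← hb, star_mul] at h
      exact h
    have e3 : E (b * (star l * l) * star b) = K := hbi b hbB _ hbB' _
    have h : star y * y = K - (2 * t : ℝ) • (b * star b) := by
      rw [← hy, star_star]
      have : ((t : ℂ) • x - b * star l) * star ((t : ℂ) • x - b * star l)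
          = (t * t : ℂ) • (x * star x) - (t : ℂ) • (x * l * star b)
            - (t : ℂ) • (b * (star l * star x)) + b * (star l * l) * star b := by
        simp only [star_sub, star_smul, star_mul, star_star, sub_mul, mul_sub, smul_mul_assoc,
          mul_smul_comm, smul_sub, smul_smul, mul_assoc, RCLike.star_def, Complex.conj_ofReal]
        abel
      rw [this, map_add, map_sub, map_sub, map_smul, map_smul, map_smul, e1, e2, e3, hx,
        smul_zero, two_mul, add_smul, Complex.coe_smul]
      abel
    refine CStarAlgebra.norm_le_norm_of_nonneg_of_le
      (smul_nonneg (by positivity) (mul_star_self_nonneg b)) ?_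
    rw [← sub_nonneg, ← h]
    exact star_mul_self_nonneg y
  have h0 : ‖b * star b‖ ≤ 0 := by
    by_contra hne
    push Not at hne
    have h := key (‖K‖ / ‖b * star b‖ + 1) (by positivity)
    rw [norm_smul, Real.norm_of_nonneg (by positivity)] at h
    have h' : 2 * (‖K‖ / ‖b * star b‖ + 1) * ‖b * star b‖ = 2 * ‖K‖ + 2 * ‖b * star b‖ := by
      field_simp
    rw [h'] at h
    linarith [norm_nonneg K]
  exact CStarRing.mul_star_self_eq_zero_iff b |>.mp (norm_le_zero_iff.mp h0)

/-! ### The centre of a simple unital C*-algebra -/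

/-- A central element `z` of a simple `B` is a scalar: for `r` in its spectrum, the closed ideal
generated by `z - r` cannot contain `1`, so it is zero. -/
lemma central_eq_scalar [Nontrivial A] {B : StarSubalgebra ℂ A} (hBclosed : IsClosed (B : Set A))
    (hBsimple : IsSimpleCStar (B : Set A)) {z : A} (hz : z ∈ B)
    (hcomm : ∀ b ∈ B, z * b = b * z) : ∃ r : ℂ, z = algebraMap ℂ A r := by
  obtain ⟨r, hr⟩ := spectrum.nonempty z
  refine ⟨r, ?_⟩
  rw [spectrum.mem_iff] at hr
  set y := algebraMap ℂ A r - z with hy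
  have hyB : y ∈ B := sub_mem (B.algebraMap_mem r) hz
  have hyc : ∀ b ∈ B, y * b = b * y := fun b hb => by
    rw [hy, sub_mul, mul_sub, hcomm b hb, Algebra.commutes]
  let J : Set A := (fun b => y * b) '' (B : Set A)
  have hJB : J ⊆ B := by
    rintro _ ⟨b, hb, rfl⟩
    exact mul_mem hyB hb
  have hyJ : y ∈ J := ⟨1, B.one_mem, mul_one y⟩
  have hadd : ∀ p ∈ closure J, ∀ q ∈ closure J, p + q ∈ closure J := by
    intro p hp q hq
    refine map_mem_closure₂ continuous_add hp hq ?_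
    rintro _ ⟨b, hb, rfl⟩ _ ⟨c, hc, rfl⟩
    exact ⟨b + c, add_mem hb hc, mul_add y b c⟩
  have hmul : ∀ p ∈ closure J, ∀ b ∈ (B : Set A), p * b ∈ closure J ∧ b * p ∈ closure J := by
    intro p hp b hb
    constructor
    · refine map_mem_closure (f := fun x => x * b) (by fun_prop) hp ?_
      rintro _ ⟨c, hc, rfl⟩
      exact ⟨c * b, mul_mem hc hb, (mul_assoc y c b).symm⟩
    · refine map_mem_closure (f := fun x => b * x) (by fun_prop) hp ?_
      rintro _ ⟨c, hc, rfl⟩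
      refine ⟨b * c, mul_mem hb hc, ?_⟩
      simp only [← mul_assoc, hyc b hb]
  rcases hBsimple (closure J) (closure_minimal hJB hBclosed) isClosed_closure
    (subset_closure ⟨0, B.zero_mem, mul_zero y⟩) hadd hmul with h | h
  · have : y ∈ ({0} : Set A) := h ▸ subset_closure hyJ
    exact (sub_eq_zero.mp this).symm
  · exfalso
    have h1 : (1 : A) ∈ closure J := h ▸ B.one_mem
    -- an invertible `y b` with `y`, `b` commuting forces `y` to be invertible
    obtain ⟨_, hu, b, hb, rfl⟩ := mem_closure_iff.mp h1 {x | IsUnit x} Units.isOpen isUnit_one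
    exact hr ((Commute.isUnit_mul_iff (hyc b hb)).mp hu).1

/-! ### Normalizers, the centralizer and `genC` -/

set_option linter.unusedSectionVars false

section Normalizer

variable {B : StarSubalgebra ℂ A}

lemma cent_star {c : A} (hc : c ∈ cent (B : Set A)) : star c ∈ cent (B : Set A) := fun b hb => by
  simpa using (congrArg star (hc (star b) (star_mem hb))).symm

lemma cent_mul {c d : A} (hc : c ∈ cent (B : Set A)) (hd : d ∈ cent (B : Set A)) :
    c * d ∈ cent (B : Set A) := fun b hb => by
  rw [mul_assoc, hd b hb, ← mul_assoc, hc b hb, mul_assoc]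

lemma normalizer_conj_mem {u b : A} (hu : u ∈ normalizer (B : Set A)) (hb : b ∈ B) :
    u * b * star u ∈ B := by
  have : u * b * star u ∈ (fun x => u * x * star u) '' (B : Set A) := ⟨b, hb, rfl⟩
  rwa [hu.2] at this

lemma conj_conj_star {u : A} (hu : u ∈ unitary A) (x : A) :
    u * (star u * x * u) * star u = x := by
  have h := Unitary.mul_star_self_of_mem hu
  calc u * (star u * x * u) * star u = (u * star u) * x * (u * star u) := by noncomm_ring
    _ = x := by rw [h, one_mul, mul_one]

lemma conj_star_conj {u : A} (hu : u ∈ unitary A) (x : A) :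
    star u * (u * x * star u) * u = x := by
  simpa using conj_conj_star (Unitary.star_mem hu) x

lemma normalizer_conj_star_mem {u b : A} (hu : u ∈ normalizer (B : Set A)) (hb : b ∈ B) :
    star u * b * u ∈ B := by
  have : b ∈ (fun x => u * x * star u) '' (B : Set A) := by rwa [hu.2]
  obtain ⟨x, hx, rfl⟩ := this
  rw [conj_star_conj hu.1]
  exact hx

lemma normalizer_star {u : A} (hu : u ∈ normalizer (B : Set A)) :
    star u ∈ normalizer (B : Set A) := by
  refine ⟨Unitary.star_mem hu.1, Set.Subset.antisymm ?_ ?_⟩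
  · rintro _ ⟨b, hb, rfl⟩
    simpa using normalizer_conj_star_mem hu hb
  · intro b hb
    exact ⟨u * b * star u, normalizer_conj_mem hu hb, by simpa using conj_star_conj hu.1 b⟩

lemma normalizer_mul {u v : A} (hu : u ∈ normalizer (B : Set A))
    (hv : v ∈ normalizer (B : Set A)) : u * v ∈ normalizer (B : Set A) := by
  refine ⟨mul_mem hu.1 hv.1, ?_⟩
  conv_rhs => rw [← hu.2, ← hv.2, Set.image_image]
  simp only [star_mul, mul_assoc]

lemma cent_conj {u c : A} (hu : u ∈ normalizer (B : Set A)) (hc : c ∈ cent (B : Set A)) :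
    u * c * star u ∈ cent (B : Set A) := fun b hb => by
  have h := hc _ (normalizer_conj_star_mem hu hb)
  have hs := Unitary.mul_star_self_of_mem hu.1
  calc u * c * star u * b = u * (c * (star u * b * u)) * star u := by
        simp only [mul_assoc, hs, mul_one]
    _ = (u * star u) * b * (u * c * star u) := by rw [h]; noncomm_ring
    _ = b * (u * c * star u) := by rw [hs, one_mul]

lemma subset_genC {x : A} (hx : x ∈ (B : Set A) ∪ cent (B : Set A)) : x ∈ genC (B : Set A) :=
  StarSubalgebra.le_topologicalClosure _ (StarAlgebra.subset_adjoin ℂ _ hx)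

lemma genC_conj {u x : A} (hu : u ∈ normalizer (B : Set A)) (hx : x ∈ genC (B : Set A)) :
    u * x * star u ∈ genC (B : Set A) := by
  have hcl : IsClosed {x : A | u * x * star u ∈ genC (B : Set A)} :=
    (StarSubalgebra.isClosed_topologicalClosure
      (StarAlgebra.adjoin ℂ ((B : Set A) ∪ cent (B : Set A)))).preimage
      (f := fun x => u * x * star u) (by fun_prop)
  refine closure_minimal (s := (StarAlgebra.adjoin ℂ ((B : Set A) ∪ cent (B : Set A)) : Set A))
    ?_ hcl hx
  intro y hy
  have hs := Unitary.star_mul_self_of_mem hu.1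
  have hs' := Unitary.mul_star_self_of_mem hu.1
  simp only [Set.mem_ofPred_eq]
  induction hy using StarAlgebra.adjoin_induction with
  | mem y h =>
    rcases h with h | h
    · exact subset_genC (Or.inl (normalizer_conj_mem hu h))
    · exact subset_genC (Or.inr (cent_conj hu h))
  | algebraMap r =>
    rw [← Algebra.commutes, mul_assoc, hs', mul_one]
    exact (genC (B : Set A)).algebraMap_mem r
  | add y z _ _ hy hz =>
    rw [mul_add, add_mul]
    exact add_mem hy hz
  | mul y z _ _ hy hz =>
    have : u * (y * z) * star u = (u * y * star u) * (u * z * star u) := by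
      calc u * (y * z) * star u = u * y * 1 * z * star u := by noncomm_ring
        _ = _ := by rw [← hs]; noncomm_ring
    rw [this]
    exact mul_mem hy hz
  | star y _ hy =>
    have : u * star y * star u = star (u * y * star u) := by
      simp only [star_mul, star_star, mul_assoc]
    rw [this]
    exact star_mem hy

/-- A set stable under conjugation by `u` and by `u*` is carried onto itself by `Ad u`. -/
lemma image_conj_eq {S : Set A} {u : A} (hu : u ∈ unitary A) (h1 : ∀ x ∈ S, u * x * star u ∈ S)
    (h2 : ∀ x ∈ S, star u * x * u ∈ S) : (fun x => u * x * star u) '' S = S := by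
  refine Set.Subset.antisymm ?_ fun x hx => ⟨star u * x * u, h2 x hx, conj_conj_star hu x⟩
  rintro _ ⟨x, hx, rfl⟩
  exact h1 x hx

/-- `U(B) U(C_A(B))` absorbs passing from `v* u` to `v u*`. -/
lemma mul_star_mem_UBC {u v : A} (hv : v ∈ normalizer (B : Set A))
    (h : star v * u ∈ UBC (B : Set A)) : v * star u ∈ UBC (B : Set A) := by
  obtain ⟨b, c, hb, hbu, hc, hcu, hbc⟩ := h
  have hs := Unitary.star_mul_self_of_mem hv.1
  have hs' := Unitary.mul_star_self_of_mem hv.1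
  have hu : u = v * (b * c) := by rw [← hbc, ← mul_assoc, hs', one_mul]
  have hcomm := cent_star hc (star b) (star_mem hb)
  refine ⟨v * star b * star v, v * star c * star v, normalizer_conj_mem hv (star_mem hb),
    mul_mem (mul_mem hv.1 (Unitary.star_mem hbu)) (Unitary.star_mem hv.1),
    cent_conj hv (cent_star hc),
    mul_mem (mul_mem hv.1 (Unitary.star_mem hcu)) (Unitary.star_mem hv.1), ?_⟩
  calc v * star u = v * (star c * star b) * star v := by
        rw [hu]; simp only [star_mul, mul_assoc]
    _ = v * star b * 1 * star c * star v := by rw [hcomm]; noncomm_ring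
    _ = _ := by rw [← hs]; noncomm_ring

/-! ### Vanishing of the expectation and freeness -/

variable {E : A →ₗ[ℂ] A}

open scoped ComplexOrder in
/-- A nonzero `b ∈ B` with `b x = w x w* b` on `B` is, up to a scalar, a unitary of `B`
implementing `Ad w`; hence `w` lies in `U(B) U(C_A(B))`. -/
lemma intertwiner_eq_zero (hBclosed : IsClosed (B : Set A))
    (hBsimple : IsSimpleCStar (B : Set A)) {w : A} (hw : w ∈ normalizer (B : Set A))
    (hwn : w ∉ UBC (B : Set A)) {b : A} (hb : b ∈ B)
    (hint : ∀ x ∈ B, b * x = w * x * star w * b) : b = 0 := by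
  by_contra hne
  have : Nontrivial A := ⟨b, 0, hne⟩
  have hs := Unitary.star_mul_self_of_mem hw.1
  have hbs : star b ∈ B := star_mem hb
  have hint' : ∀ x ∈ B, x * star b = star b * (w * x * star w) := fun x hx => by
    have h := congrArg star (hint (star x) (star_mem hx))
    simpa [mul_assoc] using h
  obtain ⟨r, hr⟩ := central_eq_scalar hBclosed hBsimple (mul_mem hbs hb) (fun x hx => by
    rw [mul_assoc, hint x hx, ← mul_assoc, ← hint' x hx, mul_assoc])
  obtain ⟨s, hs'⟩ := central_eq_scalar hBclosed hBsimple (mul_mem hb hbs) (fun x hx => by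
    have h2 := hint _ (normalizer_conj_star_mem hw hx)
    have h3 := hint' _ (normalizer_conj_star_mem hw hx)
    rw [conj_conj_star hw.1] at h2 h3
    rw [mul_assoc, ← h3, ← mul_assoc, h2, mul_assoc])
  have hn : ‖b‖ ≠ 0 := norm_ne_zero_iff.mpr hne
  -- `b (b* b) = (b b*) b` identifies the two scalars
  have hsr : s = r := by
    have h : b * (star b * b) = b * star b * b := (mul_assoc _ _ _).symm
    rw [hr, hs', ← Algebra.commutes, ← sub_eq_zero, ← sub_mul, ← map_sub,
      Algebra.algebraMap_eq_smul_one, smul_mul_assoc, one_mul, smul_eq_zero] at h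
    exact (sub_eq_zero.mp (h.resolve_right hne)).symm
  subst hsr
  -- the common scalar is `‖b‖ ^ 2`
  have hpos : s = ((‖b‖ ^ 2 : ℝ) : ℂ) := by
    let : CStarAlgebra A := {}
    let := CStarAlgebra.spectralOrder A
    have := CStarAlgebra.spectralOrderedRing A
    have h1 : ‖s‖ = ‖b‖ ^ 2 := by
      rw [← norm_algebraMap' A s, ← hr, CStarRing.norm_star_mul_self, sq]
    have h2 : 0 ≤ s := by
      have h3 : s ∈ spectrum ℂ (star b * b) := by rw [hr, spectrum.scalar_eq]; rfl
      exact spectrum_nonneg_of_nonneg (star_mul_self_nonneg b) h3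
    rw [← h1]
    exact (Complex.eq_coe_norm_of_nonneg h2)
  set t : ℂ := ((‖b‖⁻¹ : ℝ) : ℂ) with ht
  have htt : t * t * s = 1 := by
    rw [hpos, ht, ← Complex.ofReal_mul, ← Complex.ofReal_mul, ← Complex.ofReal_one]
    congr 1
    field_simp
  have htstar : star t = t := Complex.conj_ofReal _
  set v := t • b with hv
  have hvB : v ∈ B := B.smul_mem hb t
  have hvv : star v * v = 1 := by
    rw [hv, star_smul, htstar, smul_mul_smul_comm, hr, Algebra.algebraMap_eq_smul_one, smul_smul,
      htt, one_smul]
  have hvv' : v * star v = 1 := by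
    rw [hv, star_smul, htstar, smul_mul_smul_comm, hs', Algebra.algebraMap_eq_smul_one, smul_smul,
      htt, one_smul]
  have hvu : v ∈ unitary A := Unitary.mem_iff.mpr ⟨hvv, hvv'⟩
  have hvint : ∀ x ∈ B, x * star v = star v * (w * x * star w) := fun x hx => by
    rw [hv, star_smul, mul_smul_comm, smul_mul_assoc, hint' x hx]
  refine hwn ⟨v, star v * w, hvB, hvu, fun x hx => ?_, mul_mem (Unitary.star_mem hvu) hw.1, ?_⟩
  · rw [← mul_assoc, hvint x hx]
    simp only [mul_assoc, hs, mul_one]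
  · rw [← mul_assoc, hvv', one_mul]

lemma condExp_normalizer_mul_cent_eq_zero (hBclosed : IsClosed (B : Set A))
    (hBsimple : IsSimpleCStar (B : Set A)) (hE : IsCondExp (B : Set A) E) {w : A}
    (hw : w ∈ normalizer (B : Set A)) (hwn : w ∉ UBC (B : Set A)) {c : A}
    (hc : c ∈ cent (B : Set A)) : E (w * c) = 0 := by
  refine intertwiner_eq_zero hBclosed hBsimple hw hwn (hE.1 _) fun x hx => ?_
  have h1 := hE.2.2.2 1 B.one_mem x hx (w * c)
  have h2 := hE.2.2.2 _ (normalizer_conj_mem hw hx) 1 B.one_mem (w * c)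
  simp only [one_mul, mul_one] at h1 h2
  rw [← h1, ← h2]
  congr 1
  calc w * c * x = w * x * 1 * c := by rw [mul_assoc, hc x hx]; noncomm_ring
    _ = w * x * star w * (w * c) := by
      rw [← Unitary.star_mul_self_of_mem hw.1]; noncomm_ring

/-- The vanishing of `E (w c)` propagates to `E (w c z)` for `z ∈ C*(B ∪ C_A(B))`. -/
lemma condExp_mul_genC_eq_zero (hE : IsCondExp (B : Set A) E) {w : A}
    (hw : w ∈ normalizer (B : Set A)) (h0 : ∀ c ∈ cent (B : Set A), E (w * c) = 0) {z : A}
    (hz : z ∈ genC (B : Set A)) : ∀ c ∈ cent (B : Set A), E (w * c * z) = 0 := by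
  obtain ⟨hcont, -⟩ := condExp_continuous_and_star hE
  let S : Set A := {z | ∀ c ∈ cent (B : Set A), E (w * c * z) = 0}
  have hS : IsClosed S := by
    simp only [S, Set.ofPred_forall]
    exact isClosed_iInter fun c => isClosed_iInter fun _ =>
      isClosed_eq (hcont.comp (by fun_prop)) continuous_const
  have hgen : ∀ g ∈ (B : Set A) ∪ cent (B : Set A), ∀ s ∈ S, g * s ∈ S := by
    rintro g (hg | hg) s hs c hc
    · have h := hE.2.2.2 _ (normalizer_conj_mem hw hg) 1 B.one_mem (w * c * s)
      simp only [mul_one, hs c hc, mul_zero] at h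
      rw [← h]
      congr 1
      calc w * c * (g * s) = w * (c * g) * s := by noncomm_ring
        _ = w * g * 1 * c * s := by rw [hc g hg]; noncomm_ring
        _ = w * g * star w * (w * c * s) := by
          rw [← Unitary.star_mul_self_of_mem hw.1]; noncomm_ring
    · have h := hs (c * g) (cent_mul hc hg)
      rw [← h]
      congr 1
      noncomm_ring
  have h1S : (1 : A) ∈ S := fun c hc => by rw [mul_one]; exact h0 c hc
  -- the elements that, with their adjoints, multiply `S` into itself form a `*`-algebra
  have hadj : ∀ y ∈ StarAlgebra.adjoin ℂ ((B : Set A) ∪ cent (B : Set A)),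
      (∀ s ∈ S, y * s ∈ S) ∧ ∀ s ∈ S, star y * s ∈ S := by
    intro y hy
    have hscal : ∀ r : ℂ, ∀ s ∈ S, algebraMap ℂ A r * s ∈ S := fun r s hs c hc => by
      rw [Algebra.algebraMap_eq_smul_one, smul_mul_assoc, one_mul, mul_smul_comm, map_smul,
        hs c hc, smul_zero]
    have hadd : ∀ p ∈ S, ∀ q ∈ S, p + q ∈ S := fun p hp q hq c hc => by
      rw [mul_add, map_add, hp c hc, hq c hc, add_zero]
    induction hy using StarAlgebra.adjoin_induction with
    | mem g h => exact ⟨hgen g h, hgen _ (h.imp (fun h => star_mem (s := B) h) cent_star)⟩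
    | algebraMap r =>
      exact ⟨hscal r, by rw [← algebraMap_star_comm]; exact hscal _⟩
    | add p q _ _ hp hq =>
      constructor
      · intro s hs
        rw [add_mul]
        exact hadd _ (hp.1 s hs) _ (hq.1 s hs)
      · intro s hs
        rw [star_add, add_mul]
        exact hadd _ (hp.2 s hs) _ (hq.2 s hs)
    | mul p q _ _ hp hq =>
      constructor
      · intro s hs
        rw [mul_assoc]
        exact hp.1 _ (hq.1 s hs)
      · intro s hs
        rw [star_mul, mul_assoc]
        exact hq.2 _ (hp.2 s hs)
    | star p _ hp => exact ⟨hp.2, by rw [star_star]; exact hp.1⟩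
  exact closure_minimal (s := (StarAlgebra.adjoin ℂ ((B : Set A) ∪ cent (B : Set A)) : Set A))
    (fun y hy => by simpa using (hadj y hy).1 1 h1S) hS hz

end Normalizer

/-- for an inclusion `B ⊆ A` of simple unital C*-algebras with a
finite-index conditional expectation `E` and `C := C*(B ∪ C_A(B))`: every `u ∈ N_A(B)`
normalizes `C_A(B)` and `C`; for `w ∈ N_A(B) \ U(B)·U(C_A(B))` the automorphism
`Ad(w)|_C` is free and `E(w) = 0`; and `E(v u*) = 0 = E(v* u)` for `u, v ∈ N_A(B)` with
`v u* ∉ U(B)·U(C_A(B))`. -/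
theorem normalizer_stabilizes_genC_and_expectation_vanishes
    (B : StarSubalgebra ℂ A) (hBclosed : IsClosed (B : Set A))
    (hAsimple : IsSimpleCStar (Set.univ : Set A))
    (hBsimple : IsSimpleCStar (B : Set A))
    (E : A →ₗ[ℂ] A) (hE : IsCondExp (B : Set A) E)
    (nE : ℕ) (lE : Fin nE → A) (hlE : IsRightQB E lE) :
    (∀ u ∈ normalizer (B : Set A),
        (fun x => u * x * star u) '' cent (B : Set A) = cent (B : Set A) ∧
        (fun x => u * x * star u) '' (genC (B : Set A) : Set A) = (genC (B : Set A) : Set A)) ∧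
    (∀ w ∈ normalizer (B : Set A), w ∉ UBC (B : Set A) →
        (∀ a ∈ (genC (B : Set A) : Set A),
            (∀ x ∈ (genC (B : Set A) : Set A), a * x = (w * x * star w) * a) → a = 0) ∧
        E w = 0) ∧
    (∀ u ∈ normalizer (B : Set A), ∀ v ∈ normalizer (B : Set A),
        v * star u ∉ UBC (B : Set A) → E (v * star u) = 0 ∧ E (star v * u) = 0) := by
  have hvanish : ∀ w ∈ normalizer (B : Set A), w ∉ UBC (B : Set A) → E w = 0 := by
    intro w hw hwn
    simpa using condExp_normalizer_mul_cent_eq_zero hBclosed hBsimple hE hw hwn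
      (c := 1) (fun b _ => by simp)
  refine ⟨fun u hu => ⟨?_, ?_⟩, fun w hw hwn => ⟨?_, hvanish w hw hwn⟩, ?_⟩
  · exact image_conj_eq hu.1 (fun x hx => cent_conj hu hx)
      fun x hx => by simpa using cent_conj (normalizer_star hu) hx
  · exact image_conj_eq hu.1 (fun x hx => genC_conj hu hx)
      fun x hx => by simpa using genC_conj (normalizer_star hu) hx
  · intro a ha haw
    have hs := Unitary.star_mul_self_of_mem hw.1
    have hs' := Unitary.mul_star_self_of_mem hw.1
    have hc : star w * a ∈ cent (B : Set A) := fun b hb => by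
      rw [mul_assoc, haw b (subset_genC (Or.inl hb))]
      calc star w * (w * b * star w * a) = (star w * w) * b * (star w * a) := by noncomm_ring
        _ = b * (star w * a) := by rw [hs, one_mul]
    have hz := condExp_mul_genC_eq_zero hE hw
      (fun c hc => condExp_normalizer_mul_cent_eq_zero hBclosed hBsimple hE hw hwn hc)
      (star_mem (s := genC (B : Set A)) ha) _ hc
    rw [← mul_assoc, hs', one_mul] at hz
    rw [hlE a]
    exact Finset.sum_eq_zero fun i _ => by rw [condExp_mul_eq_zero hE hz, zero_mul]
  · intro u hu v hv huv
    exact ⟨hvanish _ (normalizer_mul hv (normalizer_star hu)) huv,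
      hvanish _ (normalizer_mul (normalizer_star hv) hu) fun h => huv (mul_star_mem_UBC hv h)⟩

end RegularInclusion
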